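/- For every B ≠ 0, d > 0 and b ∈ (0,d), the difference ξ_B(b,z) + √(−z)/(4π) remains bounded as z → −∞; i.e. ξ_B(b,z) = −√(−z)/(4π) + O(1) as z → −∞, with the leading term independent of B. -/

import Mathlib

open Real Filter Topology Asymptotics

/-- The digamma function `ψ = Γ'/Γ`. -/
noncomputable def digamma (x : ℝ) : ℝ := deriv Real.Gamma x / Real.Gamma x

/-- The set of Landau–transverse levels
`Σ_B = {|B|(2m+1) + (πn/d)² : m ∈ ℤ_{≥0}, n ∈ ℤ_{≥1}}` of the free magnetic
Hamiltonian in a Dirichlet layer of width `d`. -/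
def landauLevels (B d : ℝ) : Set ℝ :=
  {x | ∃ m n : ℕ, x = |B| * (2 * (m : ℝ) + 1) + (π * ((n : ℝ) + 1) / d) ^ 2}

/-- The `n`-th term (for `n+1`-st transverse mode) of the series defining the
magnetic regularized Green's function:
`t_n = ln((πn)²/(2|B|d²)) − ψ((|B| − z + (πn/d)²)/(2|B|))`. -/
noncomputable def magTerm (B d z : ℝ) (n : ℕ) : ℝ :=
  Real.log ((π * ((n : ℝ) + 1)) ^ 2 / (2 * |B| * d ^ 2)) -
    digamma ((|B| - z + (π * ((n : ℝ) + 1) / d) ^ 2) / (2 * |B|))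

/-- The magnetic regularized Green's function `ξ_B(b,z)` of a point interaction at
height `b ∈ (0,d)` in the Dirichlet layer of width `d` with homogeneous magnetic
field of strength `B`. -/
noncomputable def xiB (B d b z : ℝ) : ℝ :=
  (1 / (2 * π * d)) * ∑' n : ℕ, magTerm B d z n * Real.sin (π * ((n : ℝ) + 1) * b / d) ^ 2
    + (1 / (4 * π * d)) *
      (Real.eulerMascheroniConstant + digamma (b / d) + (π / 2) * Real.cot (π * b / d))

/-!
By log-convexity of `Γ` and `Γ (x + 1) = x Γ x`, one has `ψ (y + 1/2) = log y + O(1/y)`. With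
`s = √(-z) d / π` this replaces the `n`-th term of the series, up to a summable error uniform in
`z`, by `-log (1 + s² / (n + 1)²)`, from which `B` has disappeared. These logarithms are those of
the factors of Euler's product for `sinh (π s) / (π s)`, so they add up to
`π s - log s + O(1)`. Writing `sin² = (1 - cos) / 2`, what is left is a cosine series whose
coefficients `f n` are convex in `n`: two summations by parts show that its sum is
`-f 0 / 2 + O(1) = -log s + O(1)`. The two `log s` cancel, and the series in `ξ_B` is
`-π s / 2 + O(1)`.
-/

section Digamma

lemma hasDerivAt_log_Gamma {x : ℝ} (hx : 0 < x) : HasDerivAt (log ∘ Gamma) (digamma x) x :=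
  (differentiableOn_Gamma_Ioi.differentiableAt (Ioi_mem_nhds hx)).hasDerivAt.log
    (Gamma_pos_of_pos hx).ne'

lemma log_Gamma_add_one {x : ℝ} (hx : 0 < x) : log (Gamma (x + 1)) = log x + log (Gamma x) := by
  rw [Gamma_add_one hx.ne', log_mul hx.ne' (Gamma_pos_of_pos hx).ne']

lemma slope_log_Gamma_add_one {x : ℝ} (hx : 0 < x) : slope (log ∘ Gamma) x (x + 1) = log x := by
  simp [slope_def_field, log_Gamma_add_one hx]

lemma digamma_monotoneOn : MonotoneOn digamma (Set.Ioi 0) :=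
  (convexOn_log_Gamma.monotoneOn_deriv fun _ hx =>
    (hasDerivAt_log_Gamma hx).differentiableAt).congr fun _ hx => (hasDerivAt_log_Gamma hx).deriv

lemma digamma_add_one {x : ℝ} (hx : 0 < x) : digamma (x + 1) = 1 / x + digamma x := by
  have hshift : HasDerivAt (fun t => (log ∘ Gamma) (t + 1)) (digamma (x + 1)) x :=
    (hasDerivAt_log_Gamma (by linarith)).comp_add_const x 1
  have hsum : HasDerivAt (fun t => log t + (log ∘ Gamma) t) (1 / x + digamma x) x := by
    rw [one_div]
    exact (hasDerivAt_log hx.ne').add (hasDerivAt_log_Gamma hx)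
  refine hshift.unique (hsum.congr_of_eventuallyEq ?_)
  filter_upwards [lt_mem_nhds hx] with t ht using log_Gamma_add_one ht

lemma digamma_le_log {x : ℝ} (hx : 0 < x) : digamma x ≤ log x := by
  rw [← slope_log_Gamma_add_one hx]
  exact convexOn_log_Gamma.le_slope_of_hasDerivAt hx (Set.mem_Ioi.2 (by linarith)) (by linarith)
    (hasDerivAt_log_Gamma hx)

lemma log_le_digamma_add_one {x : ℝ} (hx : 0 < x) : log x ≤ digamma (x + 1) := by
  rw [← slope_log_Gamma_add_one hx]
  exact convexOn_log_Gamma.slope_le_of_hasDerivAt hx (Set.mem_Ioi.2 (by linarith)) (by linarith)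
    (hasDerivAt_log_Gamma (by linarith))

lemma abs_log_sub_digamma_add_le {x a : ℝ} (hx : 0 < x) (ha₀ : 0 ≤ a) (ha₁ : a ≤ 1) :
    |log x - digamma (x + a)| ≤ 1 / x := by
  have hxa : x + a ∈ Set.Ioi (0 : ℝ) := Set.mem_Ioi.2 (by linarith)
  have hlower : digamma x ≤ digamma (x + a) := digamma_monotoneOn hx hxa (by linarith)
  have hupper : digamma (x + a) ≤ digamma (x + 1) :=
    digamma_monotoneOn hxa (Set.mem_Ioi.2 (by linarith)) (by linarith)
  rw [abs_le]
  constructor <;>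
    linarith [digamma_le_log hx, log_le_digamma_add_one hx, digamma_add_one hx]

end Digamma

section ConvexCosineSeries

lemma summable_mul_of_abs_le {ι : Type*} {f w : ι → ℝ} {C : ℝ} (hf : Summable f)
    (hw : ∀ i, |w i| ≤ C) : Summable fun i => f i * w i :=
  .of_norm_bounded (hf.abs.mul_right C) fun i => by
    simpa only [norm_eq_abs, abs_mul] using mul_le_mul_of_nonneg_left (hw i) (abs_nonneg (f i))

variable {f : ℕ → ℝ}

lemma hasSum_sub_succ (hf : Summable f) : HasSum (fun n => f n - f (n + 1)) (f 0) := by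
  rw [← sub_eq_of_eq_add hf.tsum_eq_zero_add]
  exact hf.hasSum.sub ((summable_nat_add_iff 1).2 hf).hasSum

lemma tsum_sub_succ_mul_succ {c : ℕ → ℝ} {C : ℝ} (hf : Summable f) (hc : ∀ n, |c n| ≤ C) :
    ∑' n, (f n - f (n + 1)) * c (n + 1) = f 0 * c 0 + ∑' n, f n * (c (n + 1) - c n) := by
  have hfc : Summable fun n => f n * c n := summable_mul_of_abs_le hf hc
  have hfc₁ : Summable fun n => f n * c (n + 1) := summable_mul_of_abs_le hf fun n => hc (n + 1)
  simp only [sub_mul, mul_sub]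
  rw [hfc₁.tsum_sub ((summable_nat_add_iff 1).2 hfc), hfc₁.tsum_sub hfc, hfc.tsum_eq_zero_add]
  ring

lemma cos_second_diff (θ x : ℝ) :
    cos (x + 2 * θ) - cos x - (cos x - cos (x - 2 * θ)) = -(4 * sin θ ^ 2) * cos x := by
  rw [cos_add, cos_sub, cos_two_mul, cos_sq']
  ring

lemma tsum_second_diff_mul_cos (hf : Summable f) (θ : ℝ) :
    ∑' n, (f n - f (n + 1) - (f (n + 1) - f (n + 2))) * cos (2 * (n + 2) * θ) =
      (f 0 - f 1) * cos (2 * θ) -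
        4 * sin θ ^ 2 * (∑' n, f n * cos (2 * (n + 1) * θ) + f 0 / 2) := by
  set c : ℕ → ℝ := fun n => cos (2 * n * θ) with hc
  have hc_le (n : ℕ) : |c n| ≤ 1 := abs_cos_le_one _
  have hc_diff_le (n : ℕ) : |c (n + 1) - c n| ≤ 1 + 1 :=
    (abs_sub _ _).trans (add_le_add (hc_le _) (hc_le _))
  have hc_second_diff (n : ℕ) :
      c (n + 2) - c (n + 1) - (c (n + 1) - c n) = -(4 * sin θ ^ 2) * c (n + 1) := by
    rw [← cos_second_diff]
    simp only [hc]
    push_cast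
    ring_nf
  have hc_zero : c 0 = 1 := by simp [hc]
  have hc_one : c 1 = 1 - 2 * sin θ ^ 2 := by
    simp only [hc, Nat.cast_one, mul_one, cos_two_mul, cos_sq']
    ring
  calc ∑' n, (f n - f (n + 1) - (f (n + 1) - f (n + 2))) * cos (2 * (n + 2) * θ)
      = ∑' n, (f n - f (n + 1) - (f (n + 1) - f (n + 2))) * c (n + 2) := by simp [hc]
    _ = (f 0 - f 1) * c 1 + ∑' n, (f n - f (n + 1)) * (c (n + 2) - c (n + 1)) :=
        tsum_sub_succ_mul_succ (hasSum_sub_succ hf).summable fun n => hc_le (n + 1)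
    _ = (f 0 - f 1) * c 1 + (f 0 * (c 1 - c 0) +
          ∑' n, f n * (c (n + 2) - c (n + 1) - (c (n + 1) - c n))) := by
        rw [tsum_sub_succ_mul_succ (c := fun n => c (n + 1) - c n) hf hc_diff_le]
    _ = (f 0 - f 1) * c 1 - 4 * sin θ ^ 2 * (∑' n, f n * c (n + 1) + f 0 / 2) := by
        simp only [hc_second_diff, mul_left_comm (f _), tsum_mul_left]
        rw [hc_zero, hc_one]
        ring
    _ = _ := by simp [hc]

lemma abs_tsum_mul_cos_add_half_le (hf : Summable f)
    (hconv : ∀ n, 2 * f (n + 1) ≤ f n + f (n + 2)) {θ : ℝ} (hθ : sin θ ≠ 0) :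
    |∑' n, f n * cos (2 * (n + 1) * θ) + f 0 / 2| ≤ (f 0 - f 1) / (2 * sin θ ^ 2) := by
  have hdiff := hasSum_sub_succ (hasSum_sub_succ hf).summable
  have hdiff_nonneg (n : ℕ) : 0 ≤ f n - f (n + 1) - (f (n + 1) - f (n + 2)) := by
    linarith [hconv n]
  have htsum : ‖∑' n, (f n - f (n + 1) - (f (n + 1) - f (n + 2))) * cos (2 * (n + 2) * θ)‖ ≤
      f 0 - f 1 := by
    refine tsum_of_norm_bounded hdiff fun n => ?_
    rw [norm_mul, norm_of_nonneg (hdiff_nonneg n)]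
    exact mul_le_of_le_one_right (hdiff_nonneg n) (abs_cos_le_one _)
  have hboundary : |(f 0 - f 1) * cos (2 * θ)| ≤ f 0 - f 1 := by
    have hfirst : 0 ≤ f 0 - f 1 := hdiff.nonneg hdiff_nonneg
    rw [abs_mul, abs_of_nonneg hfirst]
    exact mul_le_of_le_one_right hfirst (abs_cos_le_one _)
  rw [tsum_second_diff_mul_cos hf, norm_eq_abs, abs_sub_comm] at htsum
  have hscaled := (abs_sub_abs_le_abs_sub _ _).trans htsum
  rw [abs_mul, abs_of_pos (by positivity)] at hscaled
  rw [le_div_iff₀ (by positivity)]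
  linarith

lemma abs_tsum_mul_sin_sq_sub_le (hf : Summable f)
    (hconv : ∀ n, 2 * f (n + 1) ≤ f n + f (n + 2)) {θ : ℝ} (hθ : sin θ ≠ 0) :
    |∑' n, f n * sin ((n + 1) * θ) ^ 2 - ((∑' n, f n) / 2 + f 0 / 4)| ≤
      (f 0 - f 1) / (4 * sin θ ^ 2) := by
  have hsin_sq : ∑' n, f n * sin ((n + 1) * θ) ^ 2 =
      (∑' n, f n - ∑' n, f n * cos (2 * (n + 1) * θ)) / 2 := by
    rw [← hf.tsum_sub (summable_mul_of_abs_le hf fun _ => abs_cos_le_one _), ← tsum_div_const]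
    refine tsum_congr fun n => ?_
    rw [mul_assoc 2, cos_two_mul, cos_sq']
    ring
  calc |∑' n, f n * sin ((n + 1) * θ) ^ 2 - ((∑' n, f n) / 2 + f 0 / 4)|
      = |∑' n, f n * cos (2 * (n + 1) * θ) + f 0 / 2| / 2 := by
        rw [hsin_sq, ← abs_neg, ← abs_two (α := ℝ), ← abs_div, abs_two]
        congr 1
        ring
    _ ≤ (f 0 - f 1) / (2 * sin θ ^ 2) / 2 := by
        gcongr
        exact abs_tsum_mul_cos_add_half_le hf hconv hθ
    _ = (f 0 - f 1) / (4 * sin θ ^ 2) := by ring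

end ConvexCosineSeries

section EulerProduct

lemma tendsto_euler_sinh_prod (x : ℝ) :
    Tendsto (fun n : ℕ => π * x * ∏ j ∈ Finset.range n, (1 + (x / (j + 1)) ^ 2)) atTop
      (𝓝 (sinh (π * x))) := by
  have hlimit : Complex.sin (π * (x * Complex.I)) = (sinh (π * x) : ℝ) * Complex.I := by
    rw [← mul_assoc, Complex.sin_mul_I]
    push_cast
    rfl
  have hprod (n : ℕ) :
      (π : ℂ) * (x * Complex.I) *
          ∏ j ∈ Finset.range n, (1 - (x * Complex.I) ^ 2 / ((j : ℂ) + 1) ^ 2) =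
        (π * x * ∏ j ∈ Finset.range n, (1 + (x / (j + 1)) ^ 2) : ℝ) * Complex.I := by
    push_cast
    simp only [mul_pow, Complex.I_sq, mul_neg, mul_one, neg_div, sub_neg_eq_add, div_pow]
    ring
  have h := Complex.tendsto_euler_sin_prod (x * Complex.I)
  simp only [hprod, hlimit] at h
  simpa only [Function.comp_def, Complex.mul_I_im, Complex.ofReal_re] using
    (Complex.continuous_im.tendsto _).comp h

/-- The logarithm of the factor with index `n + 1` in Euler's product
`sinh (π s) / (π s) = ∏_{k ≥ 1} (1 + s² / k²)`. -/
noncomputable def logSinhFactor (s : ℝ) (n : ℕ) : ℝ := log (1 + (s / (n + 1)) ^ 2)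

lemma summable_one_div_add_one_sq : Summable fun n : ℕ => 1 / ((n : ℝ) + 1) ^ 2 := by
  simpa using (summable_nat_add_iff 1).2 (summable_one_div_nat_pow.2 one_lt_two)

lemma summable_logSinhFactor (s : ℝ) : Summable (logSinhFactor s) := by
  refine Real.summable_log_one_add_of_summable
    ((summable_one_div_add_one_sq.mul_left (s ^ 2)).congr fun n => ?_)
  rw [div_pow, mul_one_div]

lemma tsum_logSinhFactor {s : ℝ} (hs : s ≠ 0) :
    ∑' n, logSinhFactor s n = log (sinh (π * s)) - log (π * s) := by
  have hπs : π * s ≠ 0 := mul_ne_zero pi_ne_zero hs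
  have hlog := ((tendsto_euler_sinh_prod s).log (by simpa using hπs)).sub_const (log (π * s))
  refine tendsto_nhds_unique (summable_logSinhFactor s).hasSum.tendsto_sum_nat
    (hlog.congr fun n => ?_)
  have hpos (j : ℕ) : 1 + (s / (j + 1)) ^ 2 ≠ 0 := by positivity
  rw [log_mul hπs (Finset.prod_ne_zero_iff.2 fun j _ => hpos j), log_prod fun j _ => hpos j,
    add_sub_cancel_left]
  rfl

lemma two_mul_log_one_add_le {u v w : ℝ} (hu : 0 ≤ u) (hv : 0 ≤ v) (hw : 0 ≤ w)
    (h : u ^ 2 ≤ v * w) : 2 * log (1 + u) ≤ log (1 + v) + log (1 + w) := by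
  have hamgm : 2 * u ≤ v + w := by
    have hsq : (2 * u) ^ 2 ≤ (v + w) ^ 2 := by nlinarith [sq_nonneg (v - w)]
    exact le_of_sq_le_sq hsq (by positivity)
  rw [← log_mul (by positivity) (by positivity), ← Nat.cast_two, ← log_pow]
  exact log_le_log (by positivity) (by nlinarith)

lemma logSinhFactor_convex (s : ℝ) (n : ℕ) :
    2 * logSinhFactor s (n + 1) ≤ logSinhFactor s n + logSinhFactor s (n + 2) := by
  refine two_mul_log_one_add_le (sq_nonneg _) (sq_nonneg _) (sq_nonneg _) ?_
  rw [← mul_pow, div_mul_div_comm, ← sq]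
  refine pow_le_pow_left₀ (sq_nonneg _) ?_ 2
  rw [div_pow]
  push_cast
  gcongr
  nlinarith

lemma logSinhFactor_zero_sub_one_le (s : ℝ) : logSinhFactor s 0 - logSinhFactor s 1 ≤ log 4 := by
  rw [sub_le_iff_le_add, logSinhFactor, logSinhFactor, ← log_mul (by norm_num) (by positivity)]
  refine log_le_log (by positivity) ?_
  push_cast
  linarith

lemma tendsto_log_sinh_sub_self : Tendsto (fun x => log (sinh x) - x) atTop (𝓝 (-log 2)) := by
  have hexp : Tendsto (fun x : ℝ => (1 - exp (-(2 * x))) / 2) atTop (𝓝 ((1 - 0) / 2)) :=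
    ((tendsto_exp_neg_atTop_nhds_zero.comp (tendsto_id.const_mul_atTop two_pos)).const_sub
      1).div_const 2
  rw [← log_inv, ← one_div, ← sub_zero (1 : ℝ)]
  refine (hexp.log (by norm_num)).congr' ?_
  filter_upwards [eventually_gt_atTop 0] with x hx
  have hsinh : sinh x = (1 - exp (-(2 * x))) / 2 * exp x := by
    rw [sinh_eq, div_mul_eq_mul_div, sub_mul, ← exp_add]
    ring_nf
  have hfactor : (1 - exp (-(2 * x))) / 2 ≠ 0 :=
    left_ne_zero_of_mul (hsinh ▸ (sinh_pos_iff.2 hx).ne')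
  rw [hsinh, log_mul hfactor (exp_ne_zero x), log_exp, add_sub_cancel_right]

lemma tendsto_logSinhFactor_zero_sub :
    Tendsto (fun s => logSinhFactor s 0 - 2 * log s) atTop (𝓝 0) := by
  have hinv : Tendsto (fun s : ℝ => 1 + s⁻¹ ^ 2) atTop (𝓝 1) := by
    simpa using (tendsto_inv_atTop_zero.pow 2).const_add (1 : ℝ)
  rw [← log_one]
  refine (hinv.log one_ne_zero).congr' ?_
  filter_upwards [eventually_gt_atTop 0] with s hs
  have hsplit : 1 + (s / ((0 : ℕ) + 1)) ^ 2 = (1 + s⁻¹ ^ 2) * s ^ 2 := by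
    field_simp
    simp [add_comm]
  rw [logSinhFactor, hsplit, log_mul (by positivity) (by positivity), log_pow, Nat.cast_two,
    add_sub_cancel_right]

lemma tendsto_half_tsum_logSinhFactor_add :
    Tendsto (fun s => (∑' n, logSinhFactor s n) / 2 + logSinhFactor s 0 / 4 - π * s / 2) atTop
      (𝓝 (-log (2 * π) / 2)) := by
  have hsinh := tendsto_log_sinh_sub_self.comp (tendsto_id.const_mul_atTop pi_pos)
  have hlim := ((hsinh.sub_const (log π)).div_const 2).add
    (tendsto_logSinhFactor_zero_sub.div_const 4)
  convert hlim.congr' ?_ using 2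
  · rw [log_mul two_ne_zero pi_ne_zero]
    ring
  · filter_upwards [eventually_ne_atTop 0] with s hs
    simp only [Function.comp_apply, id_eq]
    rw [tsum_logSinhFactor hs, log_mul pi_ne_zero hs]
    ring

lemma tsum_logSinhFactor_mul_sin_sq_isBigO {θ : ℝ} (hθ : sin θ ≠ 0) :
    (fun s => ∑' n, logSinhFactor s n * sin ((n + 1) * θ) ^ 2 - π * s / 2) =O[atTop]
      fun _ => (1 : ℝ) := by
  have habel : (fun s => ∑' n, logSinhFactor s n * sin ((n + 1) * θ) ^ 2 -
      ((∑' n, logSinhFactor s n) / 2 + logSinhFactor s 0 / 4)) =O[atTop] fun _ => (1 : ℝ) := by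
    refine .of_bound (log 4 / (4 * sin θ ^ 2)) (.of_forall fun s => ?_)
    rw [norm_eq_abs, norm_one, mul_one]
    refine (abs_tsum_mul_sin_sq_sub_le (summable_logSinhFactor s) (logSinhFactor_convex s)
      hθ).trans ?_
    gcongr
    exact logSinhFactor_zero_sub_one_le s
  refine (habel.add (tendsto_half_tsum_logSinhFactor_add.isBigO_one ℝ)).congr_left fun s => ?_
  ring

end EulerProduct

section GreenFunction

variable {B d : ℝ}

lemma log_add_logSinhFactor (hB : B ≠ 0) (hd : d ≠ 0) {z : ℝ} (hz : z ≤ 0) (n : ℕ) :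
    log ((π * ((n : ℝ) + 1)) ^ 2 / (2 * |B| * d ^ 2)) + logSinhFactor (√(-z) * d / π) n =
      log (((π * (n + 1) / d) ^ 2 - z) / (2 * |B|)) := by
  rw [logSinhFactor, ← log_mul (by positivity) (by positivity)]
  congr 1
  rw [div_pow, div_pow, mul_pow √(-z) d, sq_sqrt (by linarith)]
  field_simp
  ring

lemma abs_magTerm_add_logSinhFactor_le (hB : B ≠ 0) (hd : d ≠ 0) {z : ℝ} (hz : z ≤ 0) (n : ℕ) :
    |magTerm B d z n + logSinhFactor (√(-z) * d / π) n| ≤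
      2 * |B| * d ^ 2 / π ^ 2 * (1 / ((n : ℝ) + 1) ^ 2) := by
  set a : ℝ := (π * (n + 1) / d) ^ 2 with ha
  have ha_pos : 0 < a := by positivity
  set y : ℝ := (a - z) / (2 * |B|) with hy
  have hay : a / (2 * |B|) ≤ y := by
    rw [hy]
    gcongr
    linarith
  have hy_pos : 0 < y := (div_pos ha_pos (by positivity)).trans_le hay
  have harg : (|B| - z + a) / (2 * |B|) = y + 1 / 2 := by
    rw [hy]
    field_simp
    ring
  calc |magTerm B d z n + logSinhFactor (√(-z) * d / π) n|
      = |log y - digamma (y + 1 / 2)| := by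
        rw [magTerm, ← ha, harg, sub_add_eq_add_sub, log_add_logSinhFactor hB hd hz]
    _ ≤ 1 / y := abs_log_sub_digamma_add_le hy_pos (by norm_num) (by norm_num)
    _ ≤ 1 / (a / (2 * |B|)) := by gcongr
    _ = 2 * |B| * d ^ 2 / π ^ 2 * (1 / ((n : ℝ) + 1) ^ 2) := by
        rw [ha]
        field_simp

lemma tsum_magTerm_mul_add_isBigO (hB : B ≠ 0) (hd : d ≠ 0) {w : ℕ → ℝ} (hw : ∀ n, |w n| ≤ 1) :
    (fun z => ∑' n, magTerm B d z n * w n + ∑' n, logSinhFactor (√(-z) * d / π) n * w n) =O[atBot]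
      fun _ => (1 : ℝ) := by
  have hsummable := summable_one_div_add_one_sq.mul_left (2 * |B| * d ^ 2 / π ^ 2)
  refine .of_bound (∑' n : ℕ, 2 * |B| * d ^ 2 / π ^ 2 * (1 / ((n : ℝ) + 1) ^ 2)) ?_
  filter_upwards [eventually_le_atBot 0] with z hz
  have hle (n : ℕ) : ‖(magTerm B d z n + logSinhFactor (√(-z) * d / π) n) * w n‖ ≤
      2 * |B| * d ^ 2 / π ^ 2 * (1 / ((n : ℝ) + 1) ^ 2) := by
    rw [norm_mul]
    exact (mul_le_of_le_one_right (norm_nonneg _) (hw n)).trans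
      (abs_magTerm_add_logSinhFactor_le hB hd hz n)
  have hlog := summable_mul_of_abs_le (summable_logSinhFactor (√(-z) * d / π)) hw
  have hmag : Summable fun n => magTerm B d z n * w n :=
    ((Summable.of_norm_bounded hsummable hle).sub hlog).congr fun n => by ring
  rw [norm_one, mul_one, ← hmag.tsum_add hlog]
  simp only [← add_mul]
  exact tsum_of_norm_bounded hsummable.hasSum hle

lemma tsum_magTerm_mul_sin_sq_isBigO (hB : B ≠ 0) (hd : 0 < d) {θ : ℝ} (hθ : sin θ ≠ 0) :
    (fun z => ∑' n, magTerm B d z n * sin ((n + 1) * θ) ^ 2 + √(-z) * d / 2) =O[atBot]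
      fun _ => (1 : ℝ) := by
  have hs : Tendsto (fun z => √(-z) * d / π) atBot atTop :=
    ((tendsto_sqrt_atTop.comp tendsto_neg_atBot_atTop).atTop_mul_const hd).atTop_div_const pi_pos
  have hw (n : ℕ) : |sin ((n + 1) * θ) ^ 2| ≤ 1 := by
    simpa only [abs_sq] using sin_sq_le_one _
  refine ((tsum_magTerm_mul_add_isBigO hB hd.ne' hw).sub
    ((tsum_logSinhFactor_mul_sin_sq_isBigO hθ).comp_tendsto hs)).congr_left fun z => ?_
  rw [Function.comp_apply, mul_div_cancel₀ _ pi_ne_zero]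
  ring

end GreenFunction

theorem xiB_large_negative_asymptotics_general {B d b : ℝ} (hB : B ≠ 0) (hd : 0 < d)
    (hb : sin (π * b / d) ≠ 0) :
    (fun z => xiB B d b z + √(-z) / (4 * π)) =O[atBot] fun _ => (1 : ℝ) := by
  have hseries := (tsum_magTerm_mul_sin_sq_isBigO hB hd hb).const_mul_left (1 / (2 * π * d))
  refine (hseries.add (isBigO_const_const (1 / (4 * π * d) *
    (eulerMascheroniConstant + digamma (b / d) + π / 2 * cot (π * b / d))) one_ne_zero
      atBot)).congr_left fun z => ?_
  have hmode (n : ℕ) : π * ((n : ℝ) + 1) * b / d = (n + 1) * (π * b / d) := by ring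
  have hleading : √(-z) / (4 * π) = 1 / (2 * π * d) * (√(-z) * d / 2) := by
    field_simp
    norm_num
  rw [xiB, hleading]
  simp only [hmode]
  ring

/-- For `B ≠ 0`, `d > 0`, `b ∈ (0,d)`, the difference `ξ_B(b,z) + √(−z)/(4π)`
remains bounded as `z → −∞`, i.e. `ξ_B(b,z) = −√(−z)/(4π) + O(1)`, the leading
term being independent of `B`. -/
theorem xiB_large_negative_asymptotics (B d b : ℝ) (hB : B ≠ 0) (hd : 0 < d)
    (hb0 : 0 < b) (hbd : b < d) :
    ∃ C z₁ : ℝ, ∀ z : ℝ, z ≤ z₁ →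
      |xiB B d b z + Real.sqrt (-z) / (4 * π)| ≤ C := by
  have hb : sin (π * b / d) ≠ 0 :=
    (sin_pos_of_pos_of_lt_pi (by positivity) (by rw [div_lt_iff₀ hd]; gcongr)).ne'
  simpa [isBigO_iff, eventually_atBot] using xiB_large_negative_asymptotics_general hB hd hb
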